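/- Let L be a nilpotent symplectic alternating algebra over a field 𝔽. Then the rank of L satisfies r(L) = dim L − dim L² = dim Z(L). In particular, if L ≠ {0} then dim Z(L) ≥ 2. -/

import Mathlib

/-!
The form turns the condition `x·L = 0` into orthogonality: `(x·y, w) = (y·w, x)`, so the center is
the orthogonal complement of `L²` (`center_eq_orthogonal`) and nondegeneracy gives
`dim Z(L) = dim L - dim L²`.

For the rank, nilpotency yields the analogue of the Frattini property: a set generates `L` as an
algebra if and only if it spans `L` modulo `L²` (`generates_iff`). If `M` is a subalgebra with
`M + L² = L`, then `M + Lⁿ = L` for all `n` by induction, because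
`L² = (M + Lⁿ)·(M + Lⁿ) ⊆ M + Lⁿ⁺¹`; conversely, every subspace containing `L²` is a subalgebra.
Hence the rank is `dim L/L²`.

Finally, a line is a subalgebra since `x·x = 0`, so an algebra of rank at most one is a line, and
a nondegenerate alternating form does not exist on a line.
-/

variable {𝔽 : Type*} [Field 𝔽] {L : Type*} [AddCommGroup L] [Module 𝔽 L]

structure SymplecticAlternatingAlgebra (𝔽 L : Type*) [Field 𝔽] [AddCommGroup L]
    [Module 𝔽 L] where
  form : L →ₗ[𝔽] L →ₗ[𝔽] 𝔽
  mul : L →ₗ[𝔽] L →ₗ[𝔽] L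
  form_alt : ∀ x, form x x = 0
  form_nondeg : ∀ x, (∀ y, form x y = 0) → x = 0
  mul_alt : ∀ x, mul x x = 0
  compat : ∀ u v w, form (mul u v) w = form (mul v w) u

namespace SymplecticAlternatingAlgebra

variable (S : SymplecticAlternatingAlgebra 𝔽 L)

/-- `U·V`, the span of all products `u·v`. -/
def prodSub (U V : Submodule 𝔽 L) : Submodule 𝔽 L := Submodule.map₂ S.mul U V

/-- An ideal: `I·L ⊆ I`. -/
def IsIdeal (I : Submodule 𝔽 L) : Prop := S.prodSub I ⊤ ≤ I

/-- Orthogonal complement with respect to the form. -/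
def perp (U : Submodule 𝔽 L) : Submodule 𝔽 L where
  carrier := {x | ∀ u ∈ U, S.form x u = 0}
  add_mem' := by
    intro a b ha hb u hu
    simp [map_add, ha u hu, hb u hu]
  zero_mem' := by
    intro u hu
    simp
  smul_mem' := by
    intro c a ha u hu
    simp [ha u hu]

/-- `lcs n = L^(n+1)`: the lower central series, `lcs 0 = L¹ = L`. -/
def lcs : ℕ → Submodule 𝔽 L
  | 0 => ⊤
  | n + 1 => S.prodSub (lcs n) ⊤

/-- `ucs n = Z_n(L)`: the upper central series. -/
def ucs : ℕ → Submodule 𝔽 L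
  | 0 => ⊥
  | n + 1 => ⨅ y : L, (ucs n).comap (S.mul.flip y)

/-- The center `Z(L)`. -/
def center : Submodule 𝔽 L := ⨅ y : L, LinearMap.ker (S.mul.flip y)

/-- Nilpotency: some term of the lower central series vanishes. -/
def IsNilpotent : Prop := ∃ n, S.lcs n = ⊥

/-- `s` generates `L` as an algebra: the smallest subspace containing `s`
and closed under the multiplication is `L` itself. -/
def Generates (s : Set L) : Prop :=
  ∀ M : Submodule 𝔽 L, s ⊆ (M : Set L) → S.prodSub M M ≤ M → M = ⊤

end SymplecticAlternatingAlgebra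

namespace SymplecticAlternatingAlgebra

variable (S : SymplecticAlternatingAlgebra 𝔽 L)

lemma mul_mem_lcs_one (x y : L) : S.mul x y ∈ S.lcs 1 :=
  Submodule.apply_mem_map₂ _ (show x ∈ S.lcs 0 from Submodule.mem_top) Submodule.mem_top

lemma mul_swap (x y : L) : S.mul x y = -S.mul y x := by
  have h := S.mul_alt (x + y)
  simp only [map_add, LinearMap.add_apply, S.mul_alt, zero_add, add_zero] at h
  exact eq_neg_of_add_eq_zero_right h

lemma center_eq_orthogonal : S.center = LinearMap.BilinForm.orthogonal S.form (S.lcs 1) := by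
  ext x
  simp only [center, Submodule.mem_iInf, LinearMap.mem_ker, LinearMap.flip_apply,
    LinearMap.BilinForm.mem_orthogonal_iff]
  constructor
  · intro h
    have hle : S.lcs 1 ≤ LinearMap.ker (S.form.flip x) := by
      refine Submodule.map₂_le.2 fun y _ w _ => ?_
      rw [LinearMap.mem_ker, LinearMap.flip_apply, ← S.compat x y w, h y, map_zero,
        LinearMap.zero_apply]
    exact fun n hn => hle hn
  · intro h y
    refine S.form_nondeg _ fun w => ?_
    rw [S.compat]
    exact h _ (S.mul_mem_lcs_one y w)

lemma finrank_center [FiniteDimensional 𝔽 L] :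
    Module.finrank 𝔽 S.center = Module.finrank 𝔽 L - Module.finrank 𝔽 (S.lcs 1) := by
  have hrefl : LinearMap.BilinForm.IsRefl S.form :=
    LinearMap.BilinForm.IsAlt.isRefl S.form_alt
  have hnd : LinearMap.BilinForm.Nondegenerate S.form :=
    hrefl.nondegenerate_iff_separatingLeft.2 S.form_nondeg
  rw [center_eq_orthogonal, LinearMap.BilinForm.finrank_orthogonal hnd]

/-- A subalgebra supplementing `L²` supplements every term of the lower central series. -/
lemma sup_lcs_eq_top {M : Submodule 𝔽 L} (hM : S.prodSub M M ≤ M) (h : M ⊔ S.lcs 1 = ⊤) (n : ℕ) :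
    M ⊔ S.lcs n = ⊤ := by
  induction n with
  | zero => exact sup_top_eq M
  | succ n ih =>
    rw [eq_top_iff, ← h]
    refine sup_le le_sup_left (Submodule.map₂_le.2 fun x _ y _ => ?_)
    obtain ⟨a, ha, b, hb, rfl⟩ := Submodule.mem_sup.1 (ih ▸ Submodule.mem_top : x ∈ M ⊔ S.lcs n)
    obtain ⟨c, hc, d, hd, rfl⟩ := Submodule.mem_sup.1 (ih ▸ Submodule.mem_top : y ∈ M ⊔ S.lcs n)
    have key : ∀ u ∈ S.lcs n, ∀ v, S.mul u v ∈ M ⊔ S.lcs (n + 1) := fun u hu v =>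
      Submodule.mem_sup_right (Submodule.apply_mem_map₂ _ hu Submodule.mem_top)
    rw [map_add S.mul, LinearMap.add_apply, map_add (S.mul a), S.mul_swap a d]
    exact add_mem (add_mem
      (Submodule.mem_sup_left (hM (Submodule.apply_mem_map₂ _ ha hc)))
      (neg_mem (key d hd a))) (key b hb _)

/-- In a nilpotent algebra, generating sets are exactly the sets that span modulo `L²`. -/
lemma generates_iff (hnil : S.IsNilpotent) (s : Set L) :
    S.Generates s ↔ Submodule.span 𝔽 s ⊔ S.lcs 1 = ⊤ := by
  constructor
  · intro h
    refine h _ (fun x hx => Submodule.mem_sup_left (Submodule.subset_span hx)) ?_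
    exact Submodule.map₂_le.2 fun x _ y _ => Submodule.mem_sup_right (S.mul_mem_lcs_one x y)
  · intro h M hs hM
    obtain ⟨n, hn⟩ := hnil
    have hM1 : M ⊔ S.lcs 1 = ⊤ :=
      top_le_iff.1 (h ▸ sup_le_sup_right (Submodule.span_le.2 hs) _)
    simpa [hn] using S.sup_lcs_eq_top hM hM1 n

lemma exists_generates [FiniteDimensional 𝔽 L] (hnil : S.IsNilpotent) :
    ∃ s : Finset L, S.Generates ↑s ∧
      s.card = Module.finrank 𝔽 L - Module.finrank 𝔽 (S.lcs 1) := by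
  classical
  obtain ⟨C, hC⟩ := Submodule.exists_isCompl (S.lcs 1)
  let b := Module.finBasis 𝔽 C
  have hinj : Function.Injective fun i => (b i : L) :=
    Subtype.val_injective.comp b.injective
  refine ⟨Finset.univ.image fun i => (b i : L), ?_, ?_⟩
  · have hspan : Submodule.span 𝔽 (Set.range fun i => (b i : L)) = C := by
      have := congrArg (Submodule.map C.subtype) b.span_eq
      rwa [Submodule.map_span, ← Set.range_comp, Submodule.map_top, Submodule.range_subtype] at this
    rw [S.generates_iff hnil, Finset.coe_image, Finset.coe_univ, Set.image_univ, hspan, sup_comm]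
    exact hC.sup_eq_top
  · rw [Finset.card_image_of_injective _ hinj, Finset.card_univ, Fintype.card_fin]
    have := Submodule.finrank_add_eq_of_isCompl hC
    omega

lemma le_card_of_generates [FiniteDimensional 𝔽 L] (hnil : S.IsNilpotent) {s : Finset L}
    (hs : S.Generates ↑s) :
    Module.finrank 𝔽 L - Module.finrank 𝔽 (S.lcs 1) ≤ s.card := by
  have h := (S.generates_iff hnil _).1 hs
  have h1 := Submodule.finrank_add_le_finrank_add_finrank (Submodule.span 𝔽 (s : Set L)) (S.lcs 1)
  rw [h, finrank_top] at h1
  have h2 : Module.finrank 𝔽 (Submodule.span 𝔽 (s : Set L)) ≤ s.card :=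
    finrank_span_finset_le_card s
  omega

lemma subsingleton_of_generates_singleton {x : L} (h : S.Generates {x}) : Subsingleton L := by
  have htop : Submodule.span 𝔽 {x} = ⊤ := by
    refine h _ Submodule.subset_span (Submodule.map₂_le.2 fun u hu v hv => ?_)
    obtain ⟨a, rfl⟩ := Submodule.mem_span_singleton.1 hu
    obtain ⟨c, rfl⟩ := Submodule.mem_span_singleton.1 hv
    simp [S.mul_alt]
  have hmul : ∀ u : L, ∃ a : 𝔽, a • x = u := fun u =>
    Submodule.mem_span_singleton.1 (htop ▸ Submodule.mem_top)
  refine subsingleton_of_forall_eq 0 fun u => S.form_nondeg u fun v => ?_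
  obtain ⟨a, rfl⟩ := hmul u
  obtain ⟨c, rfl⟩ := hmul v
  simp [S.form_alt]

end SymplecticAlternatingAlgebra

open SymplecticAlternatingAlgebra Module


theorem rank_eq_finrank_center [FiniteDimensional 𝔽 L]
    (S : SymplecticAlternatingAlgebra 𝔽 L) (hnil : S.IsNilpotent) :
    IsLeast {r : ℕ | ∃ s : Finset L, S.Generates ↑s ∧ s.card = r}
      (Module.finrank 𝔽 L - Module.finrank 𝔽 (S.lcs 1)) ∧
    Module.finrank 𝔽 L - Module.finrank 𝔽 (S.lcs 1) = Module.finrank 𝔽 S.center ∧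
    (Nontrivial L → 2 ≤ Module.finrank 𝔽 S.center) := by
  refine ⟨⟨S.exists_generates hnil, ?_⟩, S.finrank_center.symm, fun hL => ?_⟩
  · rintro r ⟨s, hs, rfl⟩
    exact S.le_card_of_generates hnil hs
  · obtain ⟨s, hs, hcard⟩ := S.exists_generates hnil
    by_contra hlt
    rw [S.finrank_center, ← hcard] at hlt
    obtain ⟨x, hx⟩ := Finset.card_le_one_iff_subset_singleton.1 (by omega : s.card ≤ 1)
    have hgen : S.Generates {x} := fun M hM =>
      hs M fun y hy => hM (by simpa using hx hy)
    exact not_subsingleton L (S.subsingleton_of_generates_singleton hgen)
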